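/- (Conservation of transfer entropy.) Let X^m and Y^m be jointly distributed random variables taking values in finite sets. Then I(X^m; Y^m) = Σ_{i=1}^{m-1} [ T^{X→Y}_{i+1}(i,i) + T^{Y→X}_{i+1}(i,i) ] + I_inst(X^m, Y^m), where T^{X→Y}_{i+1}(i,i) = I(X^i; Y_{i+1} | Y^i) and T^{Y→X}_{i+1}(i,i) = I(Y^i; X_{i+1} | X^i). -/

import Mathlib

open MeasureTheory Finset

variable {Ω : Type*} [MeasurableSpace Ω]

/-- Shannon entropy of a random variable `W` with values in a finite set:
`H(W) = -∑ w, P(W = w) log P(W = w)`. -/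
noncomputable def entropy (μ : Measure Ω) {α : Type*} [Fintype α] (W : Ω → α) : ℝ :=
  -∑ w : α, (μ (W ⁻¹' {w})).toReal * Real.log (μ (W ⁻¹' {w})).toReal

/-- Conditional entropy `H(W | V) = H(W, V) - H(V)`. -/
noncomputable def condEntropy (μ : Measure Ω) {α β : Type*} [Fintype α] [Fintype β]
    (W : Ω → α) (V : Ω → β) : ℝ :=
  entropy μ (fun ω => (W ω, V ω)) - entropy μ V

/-- Conditional mutual information `I(A; B | C) = H(A|C) + H(B|C) - H(A,B|C)`. -/
noncomputable def condMI (μ : Measure Ω) {α β γ : Type*} [Fintype α] [Fintype β] [Fintype γ]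
    (A : Ω → α) (B : Ω → β) (C : Ω → γ) : ℝ :=
  condEntropy μ A C + condEntropy μ B C - condEntropy μ (fun ω => (A ω, B ω)) C

/-- Mutual information `I(A; B) = H(A) + H(B) - H(A,B)`. -/
noncomputable def mutualInfo (μ : Measure Ω) {α β : Type*} [Fintype α] [Fintype β]
    (A : Ω → α) (B : Ω → β) : ℝ :=
  entropy μ A + entropy μ B - entropy μ (fun ω => (A ω, B ω))

/-- The prefix `X^i = (X_1, …, X_i)` of the sequence `X` (1-based indexing);
`X^0` is the empty (constant) random variable. -/
def pref {𝒳 : Type*} (X : ℕ → Ω → 𝒳) (i : ℕ) : Ω → (Fin i → 𝒳) :=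
  fun ω t => X (t.1 + 1) ω

/-- The InfoMat entry `I_{i,j} = I(X_i; Y_j | X^{i-1}, Y^{j-1})`. -/
noncomputable def infoMat (μ : Measure Ω) {𝒳 𝒴 : Type*} [Fintype 𝒳] [Fintype 𝒴]
    (X : ℕ → Ω → 𝒳) (Y : ℕ → Ω → 𝒴) (i j : ℕ) : ℝ :=
  condMI μ (X i) (Y j) (fun ω => (pref X (i - 1) ω, pref Y (j - 1) ω))

/-- Directed information `I(X^m → Y^m) = ∑_{i=1}^m I(X^i; Y_i | Y^{i-1})`. -/
noncomputable def directedInfo (μ : Measure Ω) {𝒳 𝒴 : Type*} [Fintype 𝒳] [Fintype 𝒴]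
    (m : ℕ) (X : ℕ → Ω → 𝒳) (Y : ℕ → Ω → 𝒴) : ℝ :=
  ∑ i ∈ Finset.Icc 1 m, condMI μ (pref X i) (Y i) (pref Y (i - 1))

/-- `k`-step delayed directed information
`I(D^k ∘ X^m → Y^m) = ∑_{i=k+1}^m I(X^{i-k}; Y_i | Y^{i-1})`. -/
noncomputable def delayedDI (μ : Measure Ω) {𝒳 𝒴 : Type*} [Fintype 𝒳] [Fintype 𝒴]
    (m k : ℕ) (X : ℕ → Ω → 𝒳) (Y : ℕ → Ω → 𝒴) : ℝ :=
  ∑ i ∈ Finset.Icc (k + 1) m, condMI μ (pref X (i - k)) (Y i) (pref Y (i - 1))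

/-- Instantaneous information `I_inst(X^m, Y^m) = ∑_{i=1}^m I(X_i; Y_i | X^{i-1}, Y^{i-1})`. -/
noncomputable def instInfo (μ : Measure Ω) {𝒳 𝒴 : Type*} [Fintype 𝒳] [Fintype 𝒴]
    (m : ℕ) (X : ℕ → Ω → 𝒳) (Y : ℕ → Ω → 𝒴) : ℝ :=
  ∑ i ∈ Finset.Icc 1 m, infoMat μ X Y i i

variable {𝒳 𝒴 : Type*} [Fintype 𝒳] [MeasurableSpace 𝒳] [MeasurableSingletonClass 𝒳]
  [Fintype 𝒴] [MeasurableSpace 𝒴] [MeasurableSingletonClass 𝒴]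

/-!
Mutual information is symmetric and obeys the chain rule, so lengthening both prefixes by one symbol
increases `I(X^i; Y^i)` by `I(X^i; Y_{i+1} | Y^i) + I(Y^i; X_{i+1} | X^i)` and by the instantaneous
term `I(X_{i+1}; Y_{i+1} | X^i, Y^i)`: first append `X_{i+1}`, then `Y_{i+1}`, and split the
information that `Y_{i+1}` shares with `X^{i+1}`. Summing over `i` telescopes, and the two transfer
entropies at `i = 0` vanish because `X^0` and `Y^0` are constant.

All rearrangements of tuples rest on one fact: the entropy of `W` depends only on the partition of
the sample space into the level sets of `W`.
-/

section Entropy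

variable (μ : Measure Ω) {α β : Type*} [Fintype α] [Fintype β]

theorem entropy_comp_of_injective {f : α → β} (hf : Function.Injective f) (W : Ω → α) :
    entropy μ (f ∘ W) = entropy μ W := by
  unfold entropy
  congr 1
  refine (Fintype.sum_of_injective f hf _ _ (fun b hb => ?_) (fun a => ?_)).symm
  · have preimage_eq_empty : f ∘ W ⁻¹' {b} = ∅ :=
      Set.eq_empty_of_forall_notMem fun ω hω => hb ⟨W ω, hω⟩
    simp [preimage_eq_empty]
  · have preimage_eq : f ∘ W ⁻¹' {f a} = W ⁻¹' {a} := by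
      ext ω
      exact hf.eq_iff
    rw [preimage_eq]

theorem entropy_congr {W : Ω → α} {V : Ω → β} (h : ∀ ω ω', W ω = W ω' ↔ V ω = V ω') :
    entropy μ W = entropy μ V := by
  let toFst : Set.range (fun ω => (W ω, V ω)) → α := fun p => p.1.1
  let toSnd : Set.range (fun ω => (W ω, V ω)) → β := fun p => p.1.2
  have toFst_injective : Function.Injective toFst := by
    rintro ⟨_, ω, rfl⟩ ⟨_, ω', rfl⟩ hW
    exact Subtype.ext (Prod.ext hW ((h ω ω').1 hW))
  have toSnd_injective : Function.Injective toSnd := by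
    rintro ⟨_, ω, rfl⟩ ⟨_, ω', rfl⟩ hV
    exact Subtype.ext (Prod.ext ((h ω ω').2 hV) hV)
  let := Fintype.ofInjective toFst toFst_injective
  let joint := Set.rangeFactorization fun ω => (W ω, V ω)
  calc entropy μ W = entropy μ joint := entropy_comp_of_injective μ toFst_injective joint
    _ = entropy μ V := (entropy_comp_of_injective μ toSnd_injective joint).symm

theorem entropy_of_subsingleton [IsProbabilityMeasure μ] [Subsingleton α] (W : Ω → α) :
    entropy μ W = 0 := by
  have preimage_eq_univ (w : α) : W ⁻¹' {w} = Set.univ :=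
    Set.eq_univ_of_forall fun ω => Subsingleton.elim (W ω) w
  simp [entropy, preimage_eq_univ]

end Entropy

section MutualInfo

variable (μ : Measure Ω) {α β β' γ : Type*} [Fintype α] [Fintype β] [Fintype β'] [Fintype γ]

theorem mutualInfo_comm (A : Ω → α) (B : Ω → β) : mutualInfo μ A B = mutualInfo μ B A := by
  have swap : entropy μ (fun ω => (A ω, B ω)) = entropy μ (fun ω => (B ω, A ω)) :=
    entropy_congr μ fun ω ω' => by simp only [Prod.mk.injEq, and_comm]
  rw [mutualInfo, mutualInfo, swap]
  ring

theorem mutualInfo_congr_right (A : Ω → α) {B : Ω → β} {B' : Ω → β'}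
    (h : ∀ ω ω', B ω = B ω' ↔ B' ω = B' ω') : mutualInfo μ A B = mutualInfo μ A B' := by
  have joint : entropy μ (fun ω => (A ω, B ω)) = entropy μ (fun ω => (A ω, B' ω)) :=
    entropy_congr μ fun ω ω' => by simp only [Prod.mk.injEq, h]
  rw [mutualInfo, mutualInfo, entropy_congr μ h, joint]

theorem mutualInfo_of_subsingleton_left [IsProbabilityMeasure μ] [Subsingleton α]
    (A : Ω → α) (B : Ω → β) : mutualInfo μ A B = 0 := by
  have joint : entropy μ (fun ω => (A ω, B ω)) = entropy μ B :=
    entropy_congr μ fun ω ω' => by simp only [Prod.mk.injEq, eq_iff_true_of_subsingleton, true_and]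
  rw [mutualInfo, joint, entropy_of_subsingleton]
  ring

theorem mutualInfo_prodMk_right (A : Ω → α) (B : Ω → β) (C : Ω → γ) :
    mutualInfo μ A (fun ω => (B ω, C ω)) = mutualInfo μ A C + condMI μ A B C := by
  have assoc : entropy μ (fun ω => ((A ω, B ω), C ω)) = entropy μ (fun ω => (A ω, (B ω, C ω))) :=
    entropy_congr μ fun ω ω' => by simp only [Prod.mk.injEq, and_assoc]
  simp only [mutualInfo, condMI, condEntropy, assoc]
  ring

end MutualInfo

section CondMI

variable (μ : Measure Ω) {α α' β γ δ : Type*} [Fintype α] [Fintype α'] [Fintype β] [Fintype γ]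
  [Fintype δ]

theorem condMI_congr_left {A : Ω → α} {A' : Ω → α'}
    (h : ∀ ω ω', A ω = A ω' ↔ A' ω = A' ω') (B : Ω → β) (C : Ω → γ) :
    condMI μ A B C = condMI μ A' B C := by
  have pair : entropy μ (fun ω => (A ω, C ω)) = entropy μ (fun ω => (A' ω, C ω)) :=
    entropy_congr μ fun ω ω' => by simp only [Prod.mk.injEq, h]
  have triple : entropy μ (fun ω => ((A ω, B ω), C ω)) = entropy μ (fun ω => ((A' ω, B ω), C ω)) :=
    entropy_congr μ fun ω ω' => by simp only [Prod.mk.injEq, h]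
  simp only [condMI, condEntropy, pair, triple]

theorem condMI_of_subsingleton_left [Subsingleton α] (A : Ω → α) (B : Ω → β) (C : Ω → γ) :
    condMI μ A B C = 0 := by
  have pair : entropy μ (fun ω => (A ω, C ω)) = entropy μ C :=
    entropy_congr μ fun ω ω' => by simp only [Prod.mk.injEq, eq_iff_true_of_subsingleton, true_and]
  have triple : entropy μ (fun ω => ((A ω, B ω), C ω)) = entropy μ (fun ω => (B ω, C ω)) :=
    entropy_congr μ fun ω ω' => by simp only [Prod.mk.injEq, eq_iff_true_of_subsingleton, true_and]
  simp only [condMI, condEntropy, pair, triple]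
  ring

theorem condMI_prodMk_left (A : Ω → α) (B : Ω → β) (C : Ω → γ) (D : Ω → δ) :
    condMI μ (fun ω => (A ω, B ω)) C D
      = condMI μ B C D + condMI μ A C (fun ω => (B ω, D ω)) := by
  have assoc : entropy μ (fun ω => ((A ω, B ω), D ω)) = entropy μ (fun ω => (A ω, (B ω, D ω))) :=
    entropy_congr μ fun ω ω' => by simp only [Prod.mk.injEq, and_assoc]
  have left_comm :
      entropy μ (fun ω => ((B ω, C ω), D ω)) = entropy μ (fun ω => (C ω, (B ω, D ω))) :=
    entropy_congr μ fun ω ω' => by simp only [Prod.mk.injEq, and_assoc, and_left_comm]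
  have middle_comm : entropy μ (fun ω => (((A ω, B ω), C ω), D ω))
      = entropy μ (fun ω => ((A ω, C ω), (B ω, D ω))) :=
    entropy_congr μ fun ω ω' => by simp only [Prod.mk.injEq, and_assoc, and_left_comm]
  simp only [condMI, condEntropy, assoc, left_comm, middle_comm]
  ring

end CondMI

section Prefix

theorem pref_succ_eq_iff {Ω' α : Type*} (X : ℕ → Ω' → α) (n : ℕ) (ω ω' : Ω') :
    pref X (n + 1) ω = pref X (n + 1) ω' ↔
      (X (n + 1) ω, pref X n ω) = (X (n + 1) ω', pref X n ω') := by
  simp only [pref, funext_iff, Fin.forall_fin_succ', Fin.val_castSucc, Fin.val_last,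
    Prod.mk.injEq, and_comm]

variable (μ : Measure Ω) {α β γ : Type*} [Fintype α] [Fintype β] [Fintype γ]

theorem mutualInfo_pref_succ_right (A : Ω → α) (Y : ℕ → Ω → β) (n : ℕ) :
    mutualInfo μ A (pref Y (n + 1))
      = mutualInfo μ A (pref Y n) + condMI μ A (Y (n + 1)) (pref Y n) := by
  rw [mutualInfo_congr_right μ A (pref_succ_eq_iff Y n), mutualInfo_prodMk_right]

theorem condMI_pref_succ_left (X : ℕ → Ω → α) (B : Ω → β) (C : Ω → γ) (n : ℕ) :
    condMI μ (pref X (n + 1)) B C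
      = condMI μ (pref X n) B C + condMI μ (X (n + 1)) B (fun ω => (pref X n ω, C ω)) := by
  rw [condMI_congr_left μ (pref_succ_eq_iff X n), condMI_prodMk_left]

variable (X : ℕ → Ω → α) (Y : ℕ → Ω → β)

theorem mutualInfo_pref_succ_succ (n : ℕ) :
    mutualInfo μ (pref X (n + 1)) (pref Y (n + 1))
      = mutualInfo μ (pref X n) (pref Y n)
        + (condMI μ (pref X n) (Y (n + 1)) (pref Y n)
          + condMI μ (pref Y n) (X (n + 1)) (pref X n))
        + infoMat μ X Y (n + 1) (n + 1) := by
  have append_X : mutualInfo μ (pref X (n + 1)) (pref Y n)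
      = mutualInfo μ (pref X n) (pref Y n) + condMI μ (pref Y n) (X (n + 1)) (pref X n) := by
    rw [mutualInfo_comm, mutualInfo_pref_succ_right, mutualInfo_comm]
  have split_Y : condMI μ (pref X (n + 1)) (Y (n + 1)) (pref Y n)
      = condMI μ (pref X n) (Y (n + 1)) (pref Y n) + infoMat μ X Y (n + 1) (n + 1) :=
    condMI_pref_succ_left μ X (Y (n + 1)) (pref Y n) n
  rw [mutualInfo_pref_succ_right, append_X, split_Y]
  ring

theorem mutualInfo_pref_eq_sum_range [IsProbabilityMeasure μ] (m : ℕ) :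
    mutualInfo μ (pref X m) (pref Y m)
      = ∑ i ∈ range m, (condMI μ (pref X i) (Y (i + 1)) (pref Y i)
          + condMI μ (pref Y i) (X (i + 1)) (pref X i))
        + ∑ i ∈ range m, infoMat μ X Y (i + 1) (i + 1) := by
  induction m with
  | zero => simp [mutualInfo_of_subsingleton_left]
  | succ n ih =>
    rw [mutualInfo_pref_succ_succ, ih, sum_range_succ, sum_range_succ]
    ring

theorem instInfo_eq_sum_range (m : ℕ) :
    instInfo μ m X Y = ∑ i ∈ range m, infoMat μ X Y (i + 1) (i + 1) := by
  rw [instInfo, range_eq_Ico, sum_Ico_add' (fun i => infoMat μ X Y i i)]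
  rfl

end Prefix

theorem sum_Icc_one_pred_eq_sum_range {M : Type*} [AddCommMonoid M] {f : ℕ → M} (hf : f 0 = 0)
    (m : ℕ) : ∑ i ∈ Icc 1 (m - 1), f i = ∑ i ∈ range m, f i := by
  refine sum_subset (fun i hi => ?_) (fun i hi hi' => ?_)
  · simp only [mem_Icc, mem_range] at hi ⊢
    omega
  · simp only [mem_Icc, mem_range] at hi hi'
    obtain rfl : i = 0 := by omega
    exact hf

/-- **Conservation of transfer entropy.**
`I(X^m; Y^m) = ∑_{i=1}^{m-1} [T^{X→Y}_{i+1}(i,i) + T^{Y→X}_{i+1}(i,i)] + I_inst(X^m, Y^m)`,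
where `T^{X→Y}_{i+1}(i,i) = I(X^i; Y_{i+1} | Y^i)` and `T^{Y→X}_{i+1}(i,i) = I(Y^i; X_{i+1} | X^i)`. -/
theorem transferEntropy_conservation (μ : Measure Ω) [IsProbabilityMeasure μ]
    (m : ℕ) (X : ℕ → Ω → 𝒳) (Y : ℕ → Ω → 𝒴)
    (hX : ∀ i, Measurable (X i)) (hY : ∀ j, Measurable (Y j)) :
    mutualInfo μ (pref X m) (pref Y m)
      = (∑ i ∈ Finset.Icc 1 (m - 1),
          (condMI μ (pref X i) (Y (i + 1)) (pref Y i)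
            + condMI μ (pref Y i) (X (i + 1)) (pref X i)))
        + instInfo μ m X Y := by
  have transfer_zero : condMI μ (pref X 0) (Y (0 + 1)) (pref Y 0)
      + condMI μ (pref Y 0) (X (0 + 1)) (pref X 0) = 0 := by
    rw [condMI_of_subsingleton_left, condMI_of_subsingleton_left, add_zero]
  rw [mutualInfo_pref_eq_sum_range, instInfo_eq_sum_range,
    sum_Icc_one_pred_eq_sum_range transfer_zero]
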